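/- For every p ≥ 2 there is no constant C_p such that ‖‖∂_x∂_y u(x,y)‖_{L^p_x}‖_{L^∞_y} ≤ C_p ‖‖Δu(x,y)‖_{L^∞_y}‖_{L^p_x} for all Schwartz functions u on ℝ². -/

import Mathlib

open MeasureTheory SchwartzMap
open scoped ENNReal

/-- Mixed partial derivative `∂ₓ∂_y u` on `ℝ²`. -/
noncomputable def pdXY (u : ℝ × ℝ → ℂ) : ℝ × ℝ → ℂ :=
  fun z => fderiv ℝ (fun w => fderiv ℝ u w ((1 : ℝ), (0 : ℝ))) z ((0 : ℝ), (1 : ℝ))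

/-- The Laplacian `Δu = ∂ₓ²u + ∂_y²u` on `ℝ²`. -/
noncomputable def lap (u : ℝ × ℝ → ℂ) : ℝ × ℝ → ℂ :=
  fun z => fderiv ℝ (fun w => fderiv ℝ u w ((1 : ℝ), (0 : ℝ))) z ((1 : ℝ), (0 : ℝ)) +
    fderiv ℝ (fun w => fderiv ℝ u w ((0 : ℝ), (1 : ℝ))) z ((0 : ℝ), (1 : ℝ))

/-!
Fix cutoffs `φ`, `w` on the line with `φ = 1` near `[0, 1]` and `w t = t` near `0`, and superpose
wave packets of the frequencies `ξ_j = 2π 2^j`: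
`u_N (x, y) = ∑_{j < N} exp (i ξ_j x) φ x · ξ_j⁻² w (ξ_j y)`.
For small `y` and `x ∈ [0, 1]` every packet contributes `i exp (i ξ_j x)` to `∂ₓ∂_y u_N`, so by
orthogonality the `L²` norm of `∂ₓ∂_y u_N (·, y)` over `[0, 1]` is `√N`, and its `L^p` norm is at
least that.
The main part of `Δ u_N` is `∑_j exp (i ξ_j x) φ x · (w'' - w) (ξ_j y)`. As `w'' - w` has compact
support and vanishes at `0`, at each `y` the terms decay geometrically away from the scale
`ξ_j ∼ 1 / |y|`, so `Δ u_N` is dominated by a function of `x` alone which does not depend on `N`.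
-/

open Filter
open scoped Topology ContDiff NNReal

section TensorSum

variable {ι : Type*} {s : Finset ι} {f g : ι → ℝ → ℂ}

/-- The finite sum of elementary tensors `∑ j ∈ s, f j ⊗ g j`, as a function on the plane. -/
def tensorSum (s : Finset ι) (f g : ι → ℝ → ℂ) (z : ℝ × ℝ) : ℂ :=
  ∑ j ∈ s, f j z.1 * g j z.2

lemma fderiv_tensorSum_apply (hf : ∀ j, Differentiable ℝ (f j)) (hg : ∀ j, Differentiable ℝ (g j))
    (z v : ℝ × ℝ) :
    fderiv ℝ (tensorSum s f g) z v =
      v.1 * tensorSum s (fun j ↦ deriv (f j)) g z +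
        v.2 * tensorSum s f (fun j ↦ deriv (g j)) z := by
  have hderiv : ∀ j ∈ s, HasFDerivAt (fun z : ℝ × ℝ ↦ f j z.1 * g j z.2) _ z := fun j _ ↦
    ((hf j z.1).hasDerivAt.hasFDerivAt.comp z hasFDerivAt_fst).mul
      ((hg j z.2).hasDerivAt.hasFDerivAt.comp z hasFDerivAt_snd)
  change fderiv ℝ (fun z : ℝ × ℝ ↦ ∑ j ∈ s, f j z.1 * g j z.2) z v = _
  rw [(HasFDerivAt.fun_sum hderiv).fderiv]
  simp only [tensorSum, sum_apply, Finset.mul_sum, ← Finset.sum_add_distrib]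
  refine Finset.sum_congr rfl fun j _ ↦ ?_
  simp
  ring

lemma fderiv_tensorSum_fst (hf : ∀ j, Differentiable ℝ (f j)) (hg : ∀ j, Differentiable ℝ (g j)) :
    (fun z ↦ fderiv ℝ (tensorSum s f g) z (1, 0)) = tensorSum s (fun j ↦ deriv (f j)) g := by
  ext z
  simp [fderiv_tensorSum_apply hf hg]

lemma fderiv_tensorSum_snd (hf : ∀ j, Differentiable ℝ (f j)) (hg : ∀ j, Differentiable ℝ (g j)) :
    (fun z ↦ fderiv ℝ (tensorSum s f g) z (0, 1)) = tensorSum s f (fun j ↦ deriv (g j)) := by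
  ext z
  simp [fderiv_tensorSum_apply hf hg]

lemma pdXY_tensorSum (hf : ∀ j, ContDiff ℝ 2 (f j)) (hg : ∀ j, Differentiable ℝ (g j)) :
    pdXY (tensorSum s f g) = tensorSum s (fun j ↦ deriv (f j)) (fun j ↦ deriv (g j)) := by
  have hf₁ j : Differentiable ℝ (f j) := (hf j).differentiable two_ne_zero
  have hf₂ j : Differentiable ℝ (deriv (f j)) := (hf j).differentiable_deriv_two
  unfold pdXY
  rw [fderiv_tensorSum_fst hf₁ hg, fderiv_tensorSum_snd hf₂ hg]

lemma lap_tensorSum (hf : ∀ j, ContDiff ℝ 2 (f j)) (hg : ∀ j, ContDiff ℝ 2 (g j)) :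
    lap (tensorSum s f g) =
      tensorSum s (fun j ↦ deriv (deriv (f j))) g +
        tensorSum s f (fun j ↦ deriv (deriv (g j))) := by
  have hf₁ j : Differentiable ℝ (f j) := (hf j).differentiable two_ne_zero
  have hf₂ j : Differentiable ℝ (deriv (f j)) := (hf j).differentiable_deriv_two
  have hg₁ j : Differentiable ℝ (g j) := (hg j).differentiable two_ne_zero
  have hg₂ j : Differentiable ℝ (deriv (g j)) := (hg j).differentiable_deriv_two
  unfold lap
  rw [fderiv_tensorSum_fst hf₁ hg₁, fderiv_tensorSum_snd hf₁ hg₁]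
  ext z
  exact congr($(fderiv_tensorSum_fst hf₂ hg₁) z + $(fderiv_tensorSum_snd hf₁ hg₂) z)

lemma contDiff_tensorSum {n : WithTop ℕ∞} (hf : ∀ j, ContDiff ℝ n (f j))
    (hg : ∀ j, ContDiff ℝ n (g j)) : ContDiff ℝ n (tensorSum s f g) :=
  ContDiff.sum fun j _ ↦ ((hf j).comp contDiff_fst).mul ((hg j).comp contDiff_snd)

lemma hasCompactSupport_tensorSum (hf : ∀ j, HasCompactSupport (f j))
    (hg : ∀ j, HasCompactSupport (g j)) : HasCompactSupport (tensorSum s f g) := by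
  refine .intro (s.isCompact_biUnion fun j _ ↦ (hf j).isCompact.prod (hg j).isCompact)
    fun z hz ↦ Finset.sum_eq_zero fun j hj ↦ ?_
  by_contra hne
  refine hz (Set.mem_biUnion hj ⟨subset_tsupport _ ?_, subset_tsupport _ ?_⟩)
  exacts [left_ne_zero_of_mul hne, right_ne_zero_of_mul hne]

end TensorSum

section DyadicSums

lemma div_one_add_sq_le {t : ℝ} (ht : 0 ≤ t) :
    t / (1 + t ^ 2) ≤ 4 * (2 * t / (1 + 2 * t) - t / (1 + t)) := by
  have hdiff : 4 * (2 * t / (1 + 2 * t) - t / (1 + t)) = 4 * t / ((1 + 2 * t) * (1 + t)) := by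
    field_simp
    ring
  rw [hdiff, div_le_div_iff₀ (by positivity) (by positivity)]
  nlinarith [mul_nonneg ht (sq_nonneg (t - 1)), mul_nonneg ht (sq_nonneg t)]

lemma sum_dyadic_abs_div_one_add_sq_le (N : ℕ) (t : ℝ) :
    ∑ j ∈ Finset.range N, |2 ^ j * t| / (1 + (2 ^ j * t) ^ 2) ≤ 4 := by
  let F : ℕ → ℝ := fun j ↦ 2 ^ j * |t| / (1 + 2 ^ j * |t|)
  calc ∑ j ∈ Finset.range N, |2 ^ j * t| / (1 + (2 ^ j * t) ^ 2)
      ≤ ∑ j ∈ Finset.range N, 4 * (F (j + 1) - F j) := by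
        refine Finset.sum_le_sum fun j _ ↦ ?_
        have h := div_one_add_sq_le (abs_nonneg (2 ^ j * t))
        have habs : |2 ^ j * t| = 2 ^ j * |t| := by rw [abs_mul, abs_of_pos (by positivity)]
        rw [sq_abs, habs, ← mul_assoc, ← pow_succ'] at h
        rwa [habs]
    _ = 4 * (F N - F 0) := by rw [← Finset.mul_sum, Finset.sum_range_sub]
    _ ≤ 4 * (1 - 0) := by
        gcongr
        · exact div_le_one_of_le₀ (by linarith) (by positivity)
        · positivity
    _ = 4 := by norm_num

lemma exists_norm_le_abs_div_one_add_sq {E : Type*} [NormedAddCommGroup E] [NormedSpace ℝ E]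
    {h : ℝ → E} (hh : ContDiff ℝ 1 h) (hc : HasCompactSupport h) (h0 : h 0 = 0) :
    ∃ K : ℝ≥0, ∀ t, ‖h t‖ ≤ K * (|t| / (1 + t ^ 2)) := by
  have hsmooth : ContDiff ℝ 1 fun t : ℝ ↦ (1 + t ^ 2) • h t := by fun_prop
  obtain ⟨K, hK⟩ := hsmooth.lipschitzWith_of_hasCompactSupport hc.smul_left one_ne_zero
  refine ⟨K, fun t ↦ ?_⟩
  have hlip : (1 + t ^ 2) * ‖h t‖ ≤ K * |t| := by
    have := hK.dist_le_mul t 0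
    rwa [Pi.smul_apply', Pi.smul_apply', h0, smul_zero, dist_zero_right, dist_zero_right,
      norm_smul, Real.norm_of_nonneg (by positivity), Real.norm_eq_abs] at this
  rw [← mul_div_assoc, le_div_iff₀ (by positivity)]
  linarith

lemma exists_sum_norm_dyadic_le {E : Type*} [NormedAddCommGroup E] [NormedSpace ℝ E]
    {h : ℝ → E} (hh : ContDiff ℝ 1 h) (hc : HasCompactSupport h) (h0 : h 0 = 0) :
    ∃ K : ℝ, ∀ (N : ℕ) (t : ℝ), ∑ j ∈ Finset.range N, ‖h (2 ^ j * t)‖ ≤ K := by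
  obtain ⟨K, hK⟩ := exists_norm_le_abs_div_one_add_sq hh hc h0
  refine ⟨K * 4, fun N t ↦ (Finset.sum_le_sum fun j _ ↦ hK (2 ^ j * t)).trans ?_⟩
  rw [← Finset.mul_sum]
  gcongr
  exact sum_dyadic_abs_div_one_add_sq_le N t

end DyadicSums

section WavePacket

variable {φ w : ℝ → ℂ} {ξ : ℝ}

/-- The modulation `exp (i ξ ·) φ` of `φ` to the angular frequency `ξ`. -/
noncomputable def modulate (ξ : ℝ) (φ : ℝ → ℂ) (x : ℝ) : ℂ :=
  Complex.exp (Complex.I * ξ * x) * φ x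

/-- The dilate `ξ⁻² w (ξ ·)`, normalised so that its second derivative is `w'' (ξ ·)`. -/
noncomputable def dilate (ξ : ℝ) (w : ℝ → ℂ) (y : ℝ) : ℂ :=
  (ξ ^ 2 : ℂ)⁻¹ * w (ξ * y)

lemma deriv_modulate (hφ : Differentiable ℝ φ) :
    deriv (modulate ξ φ) = modulate ξ (fun x ↦ deriv φ x + Complex.I * ξ * φ x) := by
  ext x
  have hexp := (((hasDerivAt_id x).ofReal_comp).const_mul (Complex.I * ξ)).cexp
  refine ((hexp.mul (hφ x).hasDerivAt).congr_deriv ?_).deriv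
  simp only [modulate, id]
  push_cast
  ring

lemma deriv_deriv_modulate (hφ : ContDiff ℝ 2 φ) :
    deriv (deriv (modulate ξ φ)) = modulate ξ
      (fun x ↦ deriv (deriv φ) x + 2 * Complex.I * ξ * deriv φ x - ξ ^ 2 * φ x) := by
  have hφ₁ : Differentiable ℝ φ := hφ.differentiable two_ne_zero
  have hφ₂ : Differentiable ℝ (deriv φ) := hφ.differentiable_deriv_two
  rw [deriv_modulate hφ₁, deriv_modulate (by fun_prop)]
  ext x
  simp only [modulate]
  rw [deriv_fun_add (hφ₂ x) ((hφ₁ x).const_mul _), deriv_const_mul _ (hφ₁ x)]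
  linear_combination Complex.exp (Complex.I * ξ * x) * ξ ^ 2 * φ x * Complex.I_sq

lemma deriv_dilate (hξ : ξ ≠ 0) (y : ℝ) :
    deriv (dilate ξ w) y = (ξ : ℂ)⁻¹ * deriv w (ξ * y) := by
  unfold dilate
  rw [deriv_const_mul_field, deriv_comp_mul_left, Complex.real_smul]
  have : (ξ : ℂ) ≠ 0 := mod_cast hξ
  field_simp

lemma deriv_deriv_dilate (hξ : ξ ≠ 0) (y : ℝ) :
    deriv (deriv (dilate ξ w)) y = deriv (deriv w) (ξ * y) := by
  rw [funext (deriv_dilate hξ), deriv_const_mul_field, deriv_comp_mul_left, Complex.real_smul]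
  exact inv_mul_cancel_left₀ (mod_cast hξ) _

lemma contDiff_modulate {n : WithTop ℕ∞} (hφ : ContDiff ℝ n φ) : ContDiff ℝ n (modulate ξ φ) :=
  (contDiff_const.mul Complex.ofRealCLM.contDiff).cexp.mul hφ

lemma contDiff_dilate {n : WithTop ℕ∞} (hw : ContDiff ℝ n w) : ContDiff ℝ n (dilate ξ w) :=
  contDiff_const.mul (hw.comp (contDiff_const.mul contDiff_id))

lemma hasCompactSupport_modulate (hφ : HasCompactSupport φ) : HasCompactSupport (modulate ξ φ) :=
  hφ.mul_left

lemma hasCompactSupport_dilate (hξ : ξ ≠ 0) (hw : HasCompactSupport w) :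
    HasCompactSupport (dilate ξ w) :=
  (hw.comp_smul hξ).mul_left

lemma norm_laplacian_wavePacket_le (hφ : ContDiff ℝ 2 φ) (hξ : 1 ≤ ξ) (x y : ℝ) :
    ‖deriv (deriv (modulate ξ φ)) x * dilate ξ w y +
        modulate ξ φ x * deriv (deriv (dilate ξ w)) y‖ ≤
      ‖φ x‖ * ‖deriv (deriv w) (ξ * y) - w (ξ * y)‖ +
        ξ⁻¹ * ((‖deriv (deriv φ) x‖ + 2 * ‖deriv φ x‖) * ‖w (ξ * y)‖) := by
  have hξ0 : 0 < ξ := one_pos.trans_le hξ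
  have hξC : (ξ : ℂ) ≠ 0 := mod_cast hξ0.ne'
  have hfactor : deriv (deriv (modulate ξ φ)) x * dilate ξ w y +
        modulate ξ φ x * deriv (deriv (dilate ξ w)) y =
      Complex.exp (Complex.I * ξ * x) * (φ x * (deriv (deriv w) (ξ * y) - w (ξ * y)) +
        (ξ : ℂ)⁻¹ * (((ξ : ℂ)⁻¹ * deriv (deriv φ) x + 2 * Complex.I * deriv φ x) * w (ξ * y))) := by
    rw [deriv_deriv_modulate hφ, deriv_deriv_dilate hξ0.ne']
    simp only [modulate, dilate]
    field_simp
    ring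
  have hlower : ‖(ξ : ℂ)⁻¹ * deriv (deriv φ) x + 2 * Complex.I * deriv φ x‖ ≤
      ‖deriv (deriv φ) x‖ + 2 * ‖deriv φ x‖ := by
    refine (norm_add_le _ _).trans (add_le_add ?_ (by simp))
    rw [norm_mul, norm_inv, Complex.norm_real, Real.norm_of_nonneg hξ0.le]
    exact mul_le_of_le_one_left (norm_nonneg _) (inv_le_one_of_one_le₀ hξ)
  have hwave : ‖Complex.exp (Complex.I * ξ * x)‖ = 1 := by simp [Complex.norm_exp]
  rw [hfactor, norm_mul, hwave, one_mul]
  refine (norm_add_le _ _).trans (add_le_add (norm_mul _ _).le ?_)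
  rw [norm_mul, norm_mul, norm_inv, Complex.norm_real, Real.norm_of_nonneg hξ0.le]
  gcongr

end WavePacket

section DyadicWavePacketSum

variable {φ w : ℝ → ℂ}

/-- The frequency `2π 2^j`; the factor `2π` makes the waves `1`-periodic. -/
noncomputable def dyadicFreq (j : ℕ) : ℝ := 2 ^ j * (2 * Real.pi)

lemma two_pow_le_dyadicFreq (j : ℕ) : 2 ^ j ≤ dyadicFreq j :=
  le_mul_of_one_le_right (by positivity) (by linarith [Real.pi_gt_three])

lemma one_le_dyadicFreq (j : ℕ) : 1 ≤ dyadicFreq j :=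
  (one_le_pow₀ one_le_two).trans (two_pow_le_dyadicFreq j)

lemma dyadicFreq_ne_zero (j : ℕ) : dyadicFreq j ≠ 0 :=
  (one_pos.trans_le (one_le_dyadicFreq j)).ne'

lemma sum_inv_dyadicFreq_le (N : ℕ) : ∑ j ∈ Finset.range N, (dyadicFreq j)⁻¹ ≤ 2 := by
  refine (Finset.sum_le_sum fun j _ ↦ ?_).trans (sum_geometric_two_le N)
  rw [one_div, inv_pow]
  exact inv_anti₀ (by positivity) (two_pow_le_dyadicFreq j)

/-- The lacunary exponential sum `∑ j < N, exp (2π i 2^j x)`. -/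
noncomputable def lacunarySum (N : ℕ) (x : ℝ) : ℂ :=
  ∑ j ∈ Finset.range N, Complex.exp (Complex.I * dyadicFreq j * x)

/-- The superposition of the first `N` dyadic wave packets with envelope `φ` in `x` and profile
`w` in `y`. -/
noncomputable def wavePacketSum (φ w : ℝ → ℂ) (N : ℕ) : ℝ × ℝ → ℂ :=
  tensorSum (Finset.range N) (fun j ↦ modulate (dyadicFreq j) φ) (fun j ↦ dilate (dyadicFreq j) w)

lemma contDiff_wavePacketSum {n : WithTop ℕ∞} (hφ : ContDiff ℝ n φ) (hw : ContDiff ℝ n w) (N : ℕ) :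
    ContDiff ℝ n (wavePacketSum φ w N) :=
  contDiff_tensorSum (fun _ ↦ contDiff_modulate hφ) (fun _ ↦ contDiff_dilate hw)

lemma hasCompactSupport_wavePacketSum (hφ : HasCompactSupport φ) (hw : HasCompactSupport w)
    (N : ℕ) : HasCompactSupport (wavePacketSum φ w N) :=
  hasCompactSupport_tensorSum (fun _ ↦ hasCompactSupport_modulate hφ)
    (fun j ↦ hasCompactSupport_dilate (dyadicFreq_ne_zero j) hw)

lemma norm_lap_wavePacketSum_le (hφ : ContDiff ℝ 2 φ) (hw : ContDiff ℝ 2 w) (N : ℕ) (x y : ℝ) :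
    ‖lap (wavePacketSum φ w N) (x, y)‖ ≤ ∑ j ∈ Finset.range N,
      (‖φ x‖ * ‖deriv (deriv w) (dyadicFreq j * y) - w (dyadicFreq j * y)‖ + (dyadicFreq j)⁻¹ *
        ((‖deriv (deriv φ) x‖ + 2 * ‖deriv φ x‖) * ‖w (dyadicFreq j * y)‖)) := by
  rw [wavePacketSum, lap_tensorSum (fun _ ↦ contDiff_modulate hφ) (fun _ ↦ contDiff_dilate hw),
    Pi.add_apply, tensorSum, tensorSum, ← Finset.sum_add_distrib]
  exact norm_sum_le_of_le _ fun j _ ↦ norm_laplacian_wavePacket_le hφ (one_le_dyadicFreq j) x y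

lemma exists_norm_lap_wavePacketSum_le (hφ : ContDiff ℝ 2 φ) (hφc : HasCompactSupport φ)
    (hw : ContDiff ℝ 3 w) (hwc : HasCompactSupport w) (hw0 : deriv (deriv w) 0 = w 0) :
    ∃ G : ℝ → ℝ, Continuous G ∧ HasCompactSupport G ∧
      ∀ N x y, ‖lap (wavePacketSum φ w N) (x, y)‖ ≤ G x := by
  have hw'' : ContDiff ℝ 1 (deriv (deriv w)) := by
    have : ContDiff ℝ (1 + 1 + 1) w := hw.of_le (by norm_num)
    exact this.deriv'.deriv'
  obtain ⟨K, hK⟩ := exists_sum_norm_dyadic_le (hw''.sub (hw.of_le (by norm_num)))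
    (hwc.deriv.deriv.sub hwc) (sub_eq_zero.2 hw0)
  obtain ⟨B, hB⟩ := hwc.exists_bound_of_continuous hw.continuous
  let D : ℝ → ℝ := fun x ↦ ‖deriv (deriv φ) x‖ + 2 * ‖deriv φ x‖
  have hDcont : Continuous D := by
    have hφ' : ContDiff ℝ 1 (deriv φ) := ContDiff.deriv' (hφ.of_le (by norm_num))
    have := hφ'.continuous
    have := hφ'.continuous_deriv le_rfl
    fun_prop
  have hDsupp : HasCompactSupport D := hφc.deriv.deriv.norm.add hφc.deriv.norm.mul_left
  refine ⟨fun x ↦ ‖φ x‖ * K + 2 * (D x * B), by fun_prop,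
    hφc.norm.mul_right.add hDsupp.mul_right.mul_left, fun N x y ↦ ?_⟩
  have hDB : 0 ≤ D x * B := mul_nonneg (by positivity) ((norm_nonneg _).trans (hB 0))
  refine (norm_lap_wavePacketSum_le hφ (hw.of_le (by norm_num)) N x y).trans ?_
  rw [Finset.sum_add_distrib, ← Finset.mul_sum]
  refine add_le_add (mul_le_mul_of_nonneg_left ?_ (norm_nonneg _)) ?_
  · simpa only [dyadicFreq, mul_assoc] using hK N (2 * Real.pi * y)
  · calc ∑ j ∈ Finset.range N, (dyadicFreq j)⁻¹ * (D x * ‖w (dyadicFreq j * y)‖)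
        ≤ ∑ j ∈ Finset.range N, (dyadicFreq j)⁻¹ * (D x * B) := by
          gcongr with j
          exacts [inv_nonneg.2 (zero_le_one.trans (one_le_dyadicFreq j)), hB _]
      _ ≤ 2 * (D x * B) := by
          rw [← Finset.sum_mul]
          gcongr
          exact sum_inv_dyadicFreq_le N

lemma eventually_pdXY_wavePacketSum_eq (hφ : ContDiff ℝ 2 φ) (hw : Differentiable ℝ w)
    (hw0 : ∀ᶠ t in 𝓝 0, deriv w t = 1) (N : ℕ) :
    ∀ᶠ y in 𝓝 0, ∀ x, φ =ᶠ[𝓝 x] 1 →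
      pdXY (wavePacketSum φ w N) (x, y) = Complex.I * lacunarySum N x := by
  have hnear : ∀ᶠ y in 𝓝 (0 : ℝ), ∀ j ∈ Finset.range N, deriv w (dyadicFreq j * y) = 1 := by
    refine (Finset.eventually_all _).2 fun j _ ↦ ?_
    exact ((continuous_const_mul (dyadicFreq j)).tendsto' 0 0 (mul_zero _)).eventually hw0
  filter_upwards [hnear] with y hy x hx
  have hφx : φ x = 1 := hx.eq_of_nhds
  have hφ'x : deriv φ x = 0 := by
    rw [hx.deriv_eq]
    exact deriv_const x 1
  rw [wavePacketSum, pdXY_tensorSum (fun _ ↦ contDiff_modulate hφ)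
    (fun _ ↦ by unfold dilate; fun_prop), tensorSum, lacunarySum, Finset.mul_sum]
  refine Finset.sum_congr rfl fun j hj ↦ ?_
  have hξ : (dyadicFreq j : ℂ) ≠ 0 := mod_cast dyadicFreq_ne_zero j
  rw [deriv_modulate (hφ.differentiable two_ne_zero), deriv_dilate (dyadicFreq_ne_zero j), hy j hj]
  simp only [modulate, hφx, hφ'x]
  field_simp
  ring

end DyadicWavePacketSum

section Lacunary

lemma eLpNorm_sum_fourier_sq {T : ℝ} [Fact (0 < T)] {ι : Type*} (s : Finset ι) {n : ι → ℤ}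
    (hn : n.Injective) :
    eLpNorm (fun t : AddCircle T ↦ ∑ j ∈ s, fourier (n j) t) 2 AddCircle.haarAddCircle ^ 2 =
      s.card := by
  have hnorm : ‖∑ j ∈ s, fourierLp (T := T) 2 (n j)‖ ^ 2 = s.card := by
    have horth := orthonormal_fourier (T := T).comp n hn
    rw [← inner_self_eq_norm_sq (𝕜 := ℂ)]
    simpa using congr(RCLike.re $(horth.inner_sum 1 1 s))
  have hcoe : (fun t : AddCircle T ↦ ∑ j ∈ s, fourier (n j) t) =ᵐ[AddCircle.haarAddCircle]
      (∑ j ∈ s, fourierLp (T := T) 2 (n j) :) := by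
    rw [← map_sum]
    refine EventuallyEq.trans ?_ (ContinuousMap.coeFn_toLp _ _).symm
    exact .of_eq (by ext; simp)
  rw [eLpNorm_congr_ae hcoe, ← Lp.enorm_def, ← ofReal_norm, ← ENNReal.ofReal_pow (norm_nonneg _),
    hnorm, ENNReal.ofReal_natCast]

lemma continuous_lacunarySum (N : ℕ) : Continuous (lacunarySum N) := by
  unfold lacunarySum
  fun_prop

lemma eLpNorm_lacunarySum_sq (N : ℕ) :
    eLpNorm (lacunarySum N) 2 (volume.restrict (Set.Ioc 0 1)) ^ 2 = N := by
  have hfourier : lacunarySum N =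
      (fun t : UnitAddCircle ↦ ∑ j ∈ Finset.range N, fourier (2 ^ j : ℤ) t) ∘ (↑) := by
    ext x
    refine Finset.sum_congr rfl fun j _ ↦ ?_
    rw [fourier_coe_apply, dyadicFreq]
    push_cast
    ring_nf
  have hinj : Function.Injective fun j : ℕ ↦ (2 ^ j : ℤ) := pow_right_injective₀ two_pos (by simp)
  have hvol : (volume : Measure UnitAddCircle) = AddCircle.haarAddCircle := by
    simpa using AddCircle.volume_eq_smul_haarAddCircle (T := 1)
  have hmk := UnitAddCircle.measurePreserving_mk 0
  rw [zero_add] at hmk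
  rw [hfourier, eLpNorm_comp_measurePreserving (by fun_prop) hmk, hvol,
    eLpNorm_sum_fourier_sq _ hinj, Finset.card_range]

end Lacunary

section MixedNorms

lemma le_essSup_of_eventually_nhds {α β : Type*} [TopologicalSpace α] [MeasurableSpace α]
    {μ : Measure α} [μ.IsOpenPosMeasure] [CompleteLinearOrder β] {f : α → β} {a : α} {c : β}
    (h : ∀ᶠ x in 𝓝 a, c ≤ f x) : c ≤ essSup f μ :=
  le_limsup_of_frequently_le (frequently_ae_iff.2 (Measure.measure_pos_of_mem_nhds μ h).ne')

lemma eLpNorm_toReal_essSup_nnnorm_le {α β E : Type*} [MeasurableSpace α] [MeasurableSpace β]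
    [Nonempty β] [NormedAddCommGroup E] {μ : Measure α} {ν : Measure β} {f : α → β → E}
    {G : α → ℝ} (hf : ∀ x y, ‖f x y‖ ≤ G x) (p : ℝ≥0∞) :
    eLpNorm (fun x ↦ (essSup (fun y ↦ (‖f x y‖₊ : ℝ≥0∞)) ν).toReal) p μ ≤ eLpNorm G p μ := by
  refine eLpNorm_mono_real fun x ↦ ?_
  have hG : 0 ≤ G x := (norm_nonneg _).trans (hf x (Classical.arbitrary β))
  rw [Real.norm_of_nonneg ENNReal.toReal_nonneg]
  refine ENNReal.toReal_le_of_le_ofReal hG (essSup_le_of_ae_le _ (ae_of_all _ fun y ↦ ?_))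
  change ‖f x y‖ₑ ≤ _
  rw [← ofReal_norm]
  exact ENNReal.ofReal_le_ofReal (hf x y)

end MixedNorms

lemma exists_contDiff_hasCompactSupport_eventuallyEq_one {E : Type*} [NormedAddCommGroup E]
    [NormedSpace ℝ E] [FiniteDimensional ℝ E] {s : Set E} (hs : Bornology.IsBounded s) :
    ∃ χ : E → ℂ, ContDiff ℝ ∞ χ ∧ HasCompactSupport χ ∧ ∀ x ∈ s, χ =ᶠ[𝓝 x] 1 := by
  obtain ⟨r, hr, hsr⟩ := hs.subset_ball_lt 0 0
  let b : ContDiffBump (0 : E) := ⟨r, r + 1, hr, lt_add_one r⟩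
  refine ⟨fun x ↦ (b x : ℂ), Complex.ofRealCLM.contDiff.comp b.contDiff,
    b.hasCompactSupport.comp_left Complex.ofReal_zero, fun x hx ↦ ?_⟩
  filter_upwards [b.eventuallyEq_one_of_mem_ball (hsr hx)] with t ht
  simp [ht]

lemma exists_schwartzMap_lap_le_pdXY_eq :
    ∃ (u : ℕ → 𝓢(ℝ × ℝ, ℂ)) (G : ℝ → ℝ), Continuous G ∧ HasCompactSupport G ∧
      (∀ N x y, ‖lap (u N) (x, y)‖ ≤ G x) ∧
      ∀ N, ∀ᶠ y in 𝓝 0, ∀ x ∈ Set.Icc 0 1, pdXY (u N) (x, y) = Complex.I * lacunarySum N x := by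
  obtain ⟨χ, hχ, hχc, hχ1⟩ := exists_contDiff_hasCompactSupport_eventuallyEq_one
    (Metric.isBounded_Icc (0 : ℝ) 1)
  let w : ℝ → ℂ := fun t ↦ t * χ t
  have hw : ContDiff ℝ ∞ w := Complex.ofRealCLM.contDiff.mul hχ
  have hwc : HasCompactSupport w := hχc.mul_left
  have hw_near : w =ᶠ[𝓝 0] fun t ↦ (t : ℂ) := by
    filter_upwards [hχ1 0 (by simp)] with t ht
    simp [w, ht]
  have hw'_near : deriv w =ᶠ[𝓝 0] 1 := by
    refine hw_near.deriv.trans (.of_eq ?_)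
    ext t
    exact Complex.ofRealCLM.hasDerivAt.deriv
  have hw''_zero : deriv (deriv w) 0 = w 0 := by
    rw [hw'_near.deriv_eq, hw_near.eq_of_nhds]
    exact deriv_const 0 1
  obtain ⟨G, hG, hGc, hle⟩ := exists_norm_lap_wavePacketSum_le (contDiff_infty.1 hχ 2) hχc
    (contDiff_infty.1 hw 3) hwc hw''_zero
  refine ⟨fun N ↦ (hasCompactSupport_wavePacketSum hχc hwc N).toSchwartzMap
    (contDiff_wavePacketSum hχ hw N), G, hG, hGc, hle, fun N ↦ ?_⟩
  filter_upwards [eventually_pdXY_wavePacketSum_eq (contDiff_infty.1 hχ 2)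
    (hw.differentiable (by simp)) hw'_near N] with y hy x hx
  exact hy x (hχ1 x hx)

theorem no_mixed_derivative_estimate_general {p : ℝ≥0∞} (hp : 2 ≤ p) :
    ¬ ∃ C : ℝ, ∀ u : 𝓢(ℝ × ℝ, ℂ),
      essSup (fun y : ℝ ↦ eLpNorm (fun x : ℝ ↦ pdXY u (x, y)) p volume) volume ≤
        ENNReal.ofReal C * eLpNorm (fun x : ℝ ↦
          (essSup (fun y : ℝ ↦ (‖lap u (x, y)‖₊ : ℝ≥0∞)) volume).toReal) p volume := by
  rintro ⟨C, hC⟩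
  obtain ⟨u, G, hG, hGc, hlap, hpd⟩ := exists_schwartzMap_lap_le_pdXY_eq
  have : IsProbabilityMeasure (volume.restrict (Set.Ioc (0 : ℝ) 1)) := ⟨by simp⟩
  have hslice (N : ℕ) : ∀ᶠ y in 𝓝 0, eLpNorm (lacunarySum N) p (volume.restrict (Set.Ioc 0 1)) ≤
      eLpNorm (fun x ↦ pdXY (u N) (x, y)) p volume := by
    filter_upwards [hpd N] with y hy
    refine le_trans (eLpNorm_congr_norm_ae ?_).le (eLpNorm_restrict_le _ _ _ (Set.Ioc 0 1))
    filter_upwards [ae_restrict_mem measurableSet_Ioc] with x hx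
    simp [hy x (Set.Ioc_subset_Icc_self hx)]
  have hbound (N : ℕ) : (N : ℝ≥0∞) ≤ (ENNReal.ofReal C * eLpNorm G p volume) ^ 2 := by
    rw [← eLpNorm_lacunarySum_sq]
    gcongr
    calc eLpNorm (lacunarySum N) 2 (volume.restrict (Set.Ioc 0 1))
        ≤ eLpNorm (lacunarySum N) p (volume.restrict (Set.Ioc 0 1)) :=
          eLpNorm_le_eLpNorm_of_exponent_le hp (continuous_lacunarySum N).aestronglyMeasurable
      _ ≤ essSup (fun y ↦ eLpNorm (fun x ↦ pdXY (u N) (x, y)) p volume) volume :=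
          le_essSup_of_eventually_nhds (hslice N)
      _ ≤ ENNReal.ofReal C * eLpNorm (fun x ↦
            (essSup (fun y ↦ (‖lap (u N) (x, y)‖₊ : ℝ≥0∞)) volume).toReal) p volume := hC (u N)
      _ ≤ ENNReal.ofReal C * eLpNorm G p volume := by
          gcongr
          exact eLpNorm_toReal_essSup_nnnorm_le (fun x y ↦ hlap N x y) p
  have hfin : (ENNReal.ofReal C * eLpNorm G p volume) ^ 2 ≠ ⊤ :=
    ENNReal.pow_ne_top (ENNReal.mul_ne_top ENNReal.ofReal_ne_top
      (hG.memLp_of_hasCompactSupport hGc).eLpNorm_ne_top)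
  obtain ⟨N, hN⟩ := ENNReal.exists_nat_gt hfin
  exact hN.not_ge (hbound N)

/-- For every `p ≥ 2` there is no constant `C_p` with
`‖‖∂ₓ∂_y u(x,y)‖_{L^p_x}‖_{L^∞_y} ≤ C_p ‖‖Δu(x,y)‖_{L^∞_y}‖_{L^p_x}` for all Schwartz `u`. -/
theorem no_mixed_derivative_estimate (p : ℝ) (hp : 2 ≤ p) :
    ¬ ∃ C : ℝ, ∀ u : 𝓢(ℝ × ℝ, ℂ),
      essSup (fun y : ℝ =>
          eLpNorm (fun x : ℝ => pdXY (⇑u) (x, y)) (ENNReal.ofReal p) volume) volume ≤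
        ENNReal.ofReal C *
          eLpNorm (fun x : ℝ =>
            (essSup (fun y : ℝ => (‖lap (⇑u) (x, y)‖₊ : ℝ≥0∞)) volume).toReal)
            (ENNReal.ofReal p) volume :=
  no_mixed_derivative_estimate_general (by simpa using ENNReal.ofReal_le_ofReal hp)
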